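/- arXiv:2307.00650 — 2 statements merged into one kernel-verified Lean document; each statement's English description precedes it below -/
import Mathlib

section
/- Let β_* ∈ (β̲_*, 1), β^* ∈ (β_*, 1), let (α_n) be any sequence with α_n ∈ [β_*, β^*] for all n, and let (x_n) be defined by x_{n+1} = G(α_n, x_n) with x₀ > 0. If x_n < K for some n, then x_s > x_n for every s > n; and if x_n > K for some n, then x_s < x_n for every s > n. -/
open Set Filter

/-- Prediction-based control map `G β x = (1−β) f x + β x`. -/
noncomputable def G (f : ℝ → ℝ) (β x : ℝ) : ℝ := (1 - β) * f x + β * x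

/-! On the left of `K` the control map pushes points up, and on the right it pushes them down, so an
orbit starting at `w < K` can fall back to `w` only by jumping over `K` and then returning. A jump
from `w` lands at some `y ≤ G β w`, and by the intermediate value theorem `y = G β t` with
`w ≤ t < K`. The second-iterate condition then gives `w ≤ t < G β (G β t) = G β y`, so the return
lands above `w`. Points outside the window `(f²_m, f_m)` are handled by the range of `f`. Since
`G β` moves points less as `β` grows, the controls used for the jump and for the return may differ,
as long as both exceed one admissible `β`. -/

open scoped Topology

section NoReturn

variable {X : Type*} [LinearOrder X] {K : X} {x : ℕ → X}

theorem lt_of_no_return_below (hup : ∀ s, x s < K → x s < x (s + 1))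
    (hfix : ∀ s, x s = K → x (s + 1) = K) (hdown : ∀ s, K < x s → x (s + 1) < x s)
    (hreturn : ∀ m s, x m < K → K < x s → x s ≤ x (m + 1) → x m < x (s + 1))
    {n s : ℕ} (hn : x n < K) (hs : n < s) : x n < x s := by
  -- While the orbit is above `K`, it stays below the landing point of its last upward jump.
  have hjump : x n < x s ∧ (K < x s → ∃ m, x n ≤ x m ∧ x m < K ∧ x s ≤ x (m + 1)) := by
    induction s, hs using Nat.le_induction with
    | base => exact ⟨hup n hn, fun _ => ⟨n, le_rfl, hn, le_rfl⟩⟩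
    | succ s _ ih =>
      rcases lt_trichotomy (x s) K with hsK | hsK | hsK
      · exact ⟨ih.1.trans (hup s hsK), fun _ => ⟨s, ih.1.le, hsK, le_rfl⟩⟩
      · rw [hfix s hsK]
        exact ⟨hn, fun h => absurd h (lt_irrefl K)⟩
      · obtain ⟨m, hnm, hmK, hsm⟩ := ih.2 hsK
        exact ⟨hnm.trans_lt (hreturn m s hmK hsK hsm),
          fun _ => ⟨m, hnm, hmK, (hdown s hsK).le.trans hsm⟩⟩
  exact hjump.1

theorem lt_of_no_return_above (hup : ∀ s, x s < K → x s < x (s + 1))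
    (hfix : ∀ s, x s = K → x (s + 1) = K) (hdown : ∀ s, K < x s → x (s + 1) < x s)
    (hreturn : ∀ m s, K < x m → x s < K → x (m + 1) ≤ x s → x (s + 1) < x m)
    {n s : ℕ} (hn : K < x n) (hs : n < s) : x s < x n :=
  lt_of_no_return_below (X := Xᵒᵈ) hdown hfix hup hreturn hn hs

end NoReturn

section SecondIterate

variable {X : Type*} [ConditionallyCompleteLinearOrder X] [TopologicalSpace X] [OrderTopology X]
  [DenselyOrdered X] {F : X → X} {K w y : X}

theorem lt_map_of_lt_map_map (hF : ContinuousOn F (Icc w K)) (hFK : F K = K) (hw : w ≤ K)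
    (hF₂ : ∀ t ∈ Ico w K, t < F (F t)) (hKy : K < y) (hy : y ≤ F w) : w < F y := by
  obtain ⟨t, ht, rfl⟩ := intermediate_value_Icc' hw hF ⟨hFK.trans_le hKy.le, hy⟩
  have htK : t ≠ K := ne_of_apply_ne F (hFK.symm ▸ hKy.ne')
  exact ht.1.trans_lt (hF₂ t ⟨ht.1, ht.2.lt_of_ne htK⟩)

theorem map_lt_of_map_map_lt (hF : ContinuousOn F (Icc K w)) (hFK : F K = K) (hw : K ≤ w)
    (hF₂ : ∀ t ∈ Ioc K w, F (F t) < t) (hyK : y < K) (hy : F w ≤ y) : F y < w := by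
  obtain ⟨t, ht, rfl⟩ := intermediate_value_Icc' hw hF ⟨hy, hyK.le.trans_eq hFK.symm⟩
  have htK : t ≠ K := ne_of_apply_ne F (hFK.symm ▸ hyK.ne)
  exact (hF₂ t ⟨ht.1.lt_of_ne' htK, ht.2⟩).trans_le ht.2

end SecondIterate

section ControlMap

variable {f : ℝ → ℝ} {β γ x : ℝ}

theorem G_eq_lineMap (f : ℝ → ℝ) (β x : ℝ) : G f β x = AffineMap.lineMap (f x) x β := by
  rw [AffineMap.lineMap_apply_module, G, smul_eq_mul, smul_eq_mul]

theorem G_eq_self (hx : f x = x) : G f β x = x := by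
  rw [G_eq_lineMap, hx, AffineMap.lineMap_same_apply]

theorem lt_G_iff (hβ : β < 1) : x < G f β x ↔ x < f x := by
  rw [G_eq_lineMap, right_lt_lineMap_iff_lt hβ]

theorem G_lt_iff (hβ : β < 1) : G f β x < x ↔ f x < x := by
  rw [G_eq_lineMap, lineMap_lt_right_iff_lt hβ]

theorem le_G_iff (hβ : β < 1) : x ≤ G f β x ↔ x ≤ f x := by
  rw [G_eq_lineMap, right_le_lineMap_iff_le hβ]

theorem G_le_iff (hβ : β < 1) : G f β x ≤ x ↔ f x ≤ x := by
  rw [G_eq_lineMap, lineMap_le_right_iff_le hβ]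

theorem G_lt_map_iff (hβ : 0 < β) : G f β x < f x ↔ x < f x := by
  rw [G_eq_lineMap, lineMap_lt_left_iff_lt hβ]

theorem map_lt_G_iff (hβ : 0 < β) : f x < G f β x ↔ f x < x := by
  rw [G_eq_lineMap, left_lt_lineMap_iff_lt hβ]

theorem G_le_G_of_le_map (hβγ : β ≤ γ) (hx : x ≤ f x) : G f γ x ≤ G f β x := by
  unfold G
  nlinarith

theorem G_le_G_of_map_le (hβγ : β ≤ γ) (hx : f x ≤ x) : G f β x ≤ G f γ x := by
  unfold G
  nlinarith

theorem G_pos (hβ : β ∈ Ioo 0 1) (hfx : 0 < f x) (hx : 0 < x) : 0 < G f β x :=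
  add_pos (mul_pos (sub_pos.2 hβ.2) hfx) (mul_pos hβ.1 hx)

theorem continuousOn_G {s : Set ℝ} (hf : ContinuousOn f s) : ContinuousOn (G f β) s := by
  unfold G
  fun_prop

end ControlMap

section StrongControl

variable {f : ℝ → ℝ} {K L : ℝ}

theorem eventually_one_sub_mul_le (C : ℝ) {ε : ℝ} (hε : 0 < ε) :
    ∀ᶠ β : ℝ in 𝓝[<] 1, (1 - β) * C ≤ ε := by
  have hlim : Tendsto (fun β : ℝ => (1 - β) * C) (𝓝 1) (𝓝 0) :=
    Continuous.tendsto' (by fun_prop) _ _ (by ring)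
  exact (hlim.mono_left nhdsWithin_le_nhds).eventually_le_const hε

theorem eventually_forall_G_le {a M : ℝ} (hM : ∀ x ∈ Ioo a K, f x ≤ M)
    (hL : ∀ᶠ x in 𝓝[<] K, f x - K ≤ L * (K - x)) :
    ∀ᶠ β in 𝓝[<] 1, ∀ x ∈ Ioo a K, G f β x ≤ K := by
  obtain ⟨c, hcK, hc⟩ := mem_nhdsLT_iff_exists_Ioo_subset.1 hL
  filter_upwards [Ioo_mem_nhdsLT zero_lt_one, eventually_one_sub_mul_le (1 + L) one_pos,
    eventually_one_sub_mul_le (M - c) (sub_pos.2 hcK)] with β hβ hnear hfar x hx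
  have hβ' : 0 ≤ 1 - β := sub_nonneg.2 hβ.2.le
  rcases le_or_gt x c with hxc | hcx
  · calc G f β x ≤ (1 - β) * M + β * c :=
          add_le_add (mul_le_mul_of_nonneg_left (hM x hx) hβ')
            (mul_le_mul_of_nonneg_left hxc hβ.1.le)
      _ = c + (1 - β) * (M - c) := by ring
      _ ≤ K := by linarith
  · calc G f β x = (1 - β) * (f x - K) + K - β * (K - x) := by unfold G; ring
      _ ≤ (1 - β) * (L * (K - x)) + K - β * (K - x) := by gcongr; exact hc ⟨hcx, hx.2⟩
      _ = K - (1 - (1 - β) * (1 + L)) * (K - x) := by ring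
      _ ≤ K := sub_le_self _ (mul_nonneg (sub_nonneg.2 hnear) (sub_nonneg.2 hx.2.le))

theorem eventually_forall_le_G {b m : ℝ} (hm : ∀ x ∈ Ioo K b, m ≤ f x)
    (hL : ∀ᶠ x in 𝓝[>] K, K - f x ≤ L * (x - K)) :
    ∀ᶠ β in 𝓝[<] 1, ∀ x ∈ Ioo K b, K ≤ G f β x := by
  obtain ⟨c, hKc, hc⟩ := mem_nhdsGT_iff_exists_Ioo_subset.1 hL
  filter_upwards [Ioo_mem_nhdsLT zero_lt_one, eventually_one_sub_mul_le (1 + L) one_pos,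
    eventually_one_sub_mul_le (c - m) (sub_pos.2 hKc)] with β hβ hnear hfar x hx
  have hβ' : 0 ≤ 1 - β := sub_nonneg.2 hβ.2.le
  rcases le_or_gt c x with hcx | hxc
  · calc K ≤ c - (1 - β) * (c - m) := by linarith
      _ = (1 - β) * m + β * c := by ring
      _ ≤ G f β x :=
          add_le_add (mul_le_mul_of_nonneg_left (hm x hx) hβ')
            (mul_le_mul_of_nonneg_left hcx hβ.1.le)
  · calc K ≤ K + (1 - (1 - β) * (1 + L)) * (x - K) :=
          le_add_of_nonneg_right (mul_nonneg (sub_nonneg.2 hnear) (sub_nonneg.2 hx.1.le))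
      _ = β * (x - K) + K - (1 - β) * (L * (x - K)) := by ring
      _ ≤ β * (x - K) + K - (1 - β) * (K - f x) := by gcongr; exact hc ⟨hx.1, hxc⟩
      _ = G f β x := by unfold G; ring

end StrongControl

/-- A population map with positive equilibrium `K`: below `K` the population grows, above `K` it
declines without dying out. That `f K = K` is not a field: it follows by continuity. -/
structure IsPopulationMap (f : ℝ → ℝ) (K : ℝ) : Prop where
  equilibrium_pos : 0 < K
  continuousOn : ContinuousOn f (Ioi 0)
  lt_map : ∀ x ∈ Ioo 0 K, x < f x
  map_pos_of_lt : ∀ x ∈ Ioi K, 0 < f x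
  map_lt : ∀ x ∈ Ioi K, f x < x

/-- The controls `β ∈ (0, 1)` for which two steps of `G f β` move every point of the window
`(m, M)` other than `K` strictly towards, or past, `K`. The infimum of this set is the threshold
`β̲_*` when `m = f²_m` and `M = f_m`. -/
def admissibleControls (f : ℝ → ℝ) (K m M : ℝ) : Set ℝ :=
  {β | β ∈ Ioo (0 : ℝ) 1 ∧ (∀ x ∈ Ioo m K, x < G f β (G f β x)) ∧
    ∀ x ∈ Ioo K M, G f β (G f β x) < x}

namespace IsPopulationMap

variable {f : ℝ → ℝ} {K m M β γ δ w x y : ℝ}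

theorem map_equilibrium (hf : IsPopulationMap f K) : f K = K := by
  have hfK : Tendsto f (𝓝 K) (𝓝 (f K)) :=
    hf.continuousOn.continuousAt (Ioi_mem_nhds hf.equilibrium_pos)
  apply le_antisymm
  · refine le_of_tendsto_of_tendsto (b := 𝓝[>] K) (hfK.mono_left nhdsWithin_le_nhds)
      (tendsto_id.mono_left nhdsWithin_le_nhds) ?_
    filter_upwards [self_mem_nhdsWithin] with x hx using (hf.map_lt x hx).le
  · refine le_of_tendsto_of_tendsto (b := 𝓝[<] K) (tendsto_id.mono_left nhdsWithin_le_nhds)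
      (hfK.mono_left nhdsWithin_le_nhds) ?_
    filter_upwards [Ioo_mem_nhdsLT hf.equilibrium_pos] with x hx using (hf.lt_map x hx).le

theorem le_map (hf : IsPopulationMap f K) (hx : x ∈ Ioc 0 K) : x ≤ f x := by
  rcases hx.2.lt_or_eq with hxK | rfl
  · exact (hf.lt_map x ⟨hx.1, hxK⟩).le
  · exact hf.map_equilibrium.ge

theorem map_le (hf : IsPopulationMap f K) (hx : K ≤ x) : f x ≤ x := by
  rcases hx.lt_or_eq with hKx | rfl
  · exact (hf.map_lt x hKx).le
  · exact hf.map_equilibrium.le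

theorem map_pos (hf : IsPopulationMap f K) (hx : 0 < x) : 0 < f x := by
  rcases le_or_gt x K with hxK | hKx
  · exact hx.trans_le (hf.le_map ⟨hx, hxK⟩)
  · exact hf.map_pos_of_lt x hKx

theorem eventually_mem_admissibleControls (hf : IsPopulationMap f K) (hm : 0 ≤ m)
    (hM : ∀ x ∈ Ioo 0 K, f x ≤ M) {Lm Lp : ℝ}
    (hLipL : ∀ᶠ x in 𝓝[<] K, f x - K ≤ Lm * (K - x))
    (hLipR : ∀ᶠ x in 𝓝[>] K, K - f x ≤ Lp * (x - K)) :
    ∀ᶠ β in 𝓝[<] 1, β ∈ admissibleControls f K m M := by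
  -- For `β` close to `1` one step no longer jumps over `K`, so two steps are monotone.
  filter_upwards [Ioo_mem_nhdsLT zero_lt_one, eventually_forall_G_le hM hLipL,
    eventually_forall_le_G (fun x hx => (hf.map_pos_of_lt x (mem_Ioo.1 hx).1).le) hLipR]
    with β hβ hleft hright
  refine ⟨hβ, fun x hx => ?_, fun x hx => ?_⟩
  · have hx' : x ∈ Ioo 0 K := ⟨hm.trans_lt hx.1, hx.2⟩
    have hxG : x < G f β x := (lt_G_iff hβ.2).2 (hf.lt_map x hx')
    exact hxG.trans_le ((le_G_iff hβ.2).2 (hf.le_map ⟨hx'.1.trans hxG, hleft x hx'⟩))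
  · have hGx : G f β x < x := (G_lt_iff hβ.2).2 (hf.map_lt x hx.1)
    exact ((G_le_iff hβ.2).2 (hf.map_le (hright x hx))).trans_lt hGx

theorem lt_G_of_le_G (hf : IsPopulationMap f K) (hM : ∀ x ∈ Ioo 0 K, f x ≤ M)
    (hm : ∀ x ∈ Ioo K M, m ≤ f x) (hβ : β ∈ admissibleControls f K m M) (hβγ : β ≤ γ)
    (hβδ : β ≤ δ) (hw : w ∈ Ioo 0 K) (hKy : K < y) (hy : y ≤ G f γ w) : w < G f δ y := by
  obtain ⟨⟨hβ0, -⟩, hβ₂, -⟩ := hβ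
  have hwf : w < f w := hf.lt_map w hw
  have hyf : f y < y := hf.map_lt y hKy
  have hyβ : y ≤ G f β w := hy.trans (G_le_G_of_le_map hβγ hwf.le)
  suffices h : w < G f β y from h.trans_le (G_le_G_of_map_le hβδ hyf.le)
  rcases le_or_gt w m with hwm | hmw
  · have hyM : y < M := hyβ.trans_lt (((G_lt_map_iff hβ0).2 hwf).trans_le (hM w hw))
    exact (hwm.trans (hm y ⟨hKy, hyM⟩)).trans_lt ((map_lt_G_iff hβ0).2 hyf)
  · exact lt_map_of_lt_map_map
      ((continuousOn_G hf.continuousOn).mono fun t ht => hw.1.trans_le ht.1)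
      (G_eq_self hf.map_equilibrium) hw.2.le (fun t ht => hβ₂ t ⟨hmw.trans_le ht.1, ht.2⟩)
      hKy hyβ

theorem G_lt_of_G_le (hf : IsPopulationMap f K) (hM : ∀ x ∈ Ioo 0 K, f x ≤ M)
    (hβ : β ∈ admissibleControls f K m M) (hβγ : β ≤ γ) (hβδ : β ≤ δ) (hKw : K < w)
    (hy : y ∈ Ioo 0 K) (hwy : G f γ w ≤ y) : G f δ y < w := by
  obtain ⟨⟨hβ0, -⟩, -, hβ₂⟩ := hβ
  have hyf : y < f y := hf.lt_map y hy
  have hwβ : G f β w ≤ y := (G_le_G_of_map_le hβγ (hf.map_lt w hKw).le).trans hwy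
  suffices h : G f β y < w from (G_le_G_of_le_map hβδ hyf.le).trans_lt h
  rcases le_or_gt M w with hMw | hwM
  · exact ((G_lt_map_iff hβ0).2 hyf).trans_le ((hM y hy).trans hMw)
  · exact map_lt_of_map_map_lt
      ((continuousOn_G hf.continuousOn).mono fun t ht => hf.equilibrium_pos.trans_le ht.1)
      (G_eq_self hf.map_equilibrium) hKw.le (fun t ht => hβ₂ t ⟨ht.1, ht.2.trans_lt hwM⟩) hy.2 hwβ

theorem orbit_pos (hf : IsPopulationMap f K) {α u : ℕ → ℝ} (hα : ∀ n, α n ∈ Ioo 0 1)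
    (hu0 : 0 < u 0) (hrec : ∀ n, u (n + 1) = G f (α n) (u n)) (n : ℕ) : 0 < u n := by
  induction n with
  | zero => exact hu0
  | succ n ih => exact hrec n ▸ G_pos (hα n) (hf.map_pos ih) ih

end IsPopulationMap

theorem stmt8_general {f : ℝ → ℝ} {K fm f2m Lm Lp : ℝ} (hf : IsPopulationMap f K)
    (hfm : IsGreatest (f '' Icc 0 K) fm) (hf2m : IsGLB (f '' Ioo K fm) f2m)
    (hLipL : ∀ᶠ x in 𝓝[<] K, f x - K ≤ Lm * (K - x))
    (hLipR : ∀ᶠ x in 𝓝[>] K, K - f x ≤ Lp * (x - K))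
    {α x : ℕ → ℝ} (hα : ∀ n, α n ∈ Ioo (sInf (admissibleControls f K f2m fm)) 1)
    (hx0 : 0 < x 0) (hrec : ∀ n, x (n + 1) = G f (α n) (x n)) (n : ℕ) :
    (x n < K → ∀ s > n, x n < x s) ∧ (K < x n → ∀ s > n, x s < x n) := by
  have hM : ∀ y ∈ Ioo 0 K, f y ≤ fm := fun y hy => hfm.2 ⟨y, Ioo_subset_Icc_self hy, rfl⟩
  have hm : ∀ y ∈ Ioo K fm, f2m ≤ f y := fun y hy => hf2m.1 ⟨y, hy, rfl⟩
  have hf2m0 : 0 ≤ f2m := hf2m.2 (forall_mem_image.2 fun y hy => (hf.map_pos_of_lt y hy.1).le)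
  have hadm : ∀ i j, ∃ β ∈ admissibleControls f K f2m fm, β < α i ∧ β < α j := fun i j => by
    simpa only [lt_min_iff] using exists_lt_of_csInf_lt
      (hf.eventually_mem_admissibleControls hf2m0 hM hLipL hLipR).exists
      (lt_min (hα i).1 (hα j).1)
  have hpos : ∀ i, 0 < x i := hf.orbit_pos (fun i =>
    let ⟨_, hβ, hβi, _⟩ := hadm i i; ⟨hβ.1.1.trans hβi, (hα i).2⟩) hx0 hrec
  have hup : ∀ i, x i < K → x i < x (i + 1) := fun i hi =>
    hrec i ▸ (lt_G_iff (hα i).2).2 (hf.lt_map _ ⟨hpos i, hi⟩)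
  have hfix : ∀ i, x i = K → x (i + 1) = K := fun i hi => by
    rw [hrec, hi, G_eq_self hf.map_equilibrium]
  have hdown : ∀ i, K < x i → x (i + 1) < x i := fun i hi =>
    hrec i ▸ (G_lt_iff (hα i).2).2 (hf.map_lt _ hi)
  refine ⟨fun hn s => lt_of_no_return_below hup hfix hdown (fun i j hi hj hji => ?_) hn,
    fun hn s => lt_of_no_return_above hup hfix hdown (fun i j hi hj hij => ?_) hn⟩
  · obtain ⟨β, hβ, hβi, hβj⟩ := hadm i j
    exact hrec j ▸ hf.lt_G_of_le_G hM hm hβ hβi.le hβj.le ⟨hpos i, hi⟩ hj (hrec i ▸ hji)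
  · obtain ⟨β, hβ, hβi, hβj⟩ := hadm i j
    exact hrec j ▸ hf.G_lt_of_G_le hM hβ hβi.le hβj.le hi ⟨hpos j, hj⟩ (hrec i ▸ hij)

/-- under variable control α_n ∈ [β_*, β^*] ⊂ (β̲_*, 1), once a solution is
on one side of K, it stays on the corresponding side of its current value forever. -/
theorem stmt8
    (f : ℝ → ℝ) (K : ℝ)
    (hf_cont : ContinuousOn f (Set.Ici 0))
    (hf_nonneg : ∀ x, 0 ≤ x → 0 ≤ f x)
    (hf0 : f 0 = 0)
    (hK : 0 < K)
    (hbelow : ∀ x ∈ Set.Ioo 0 K, x < f x)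
    (habove : ∀ x ∈ Set.Ioi K, 0 < f x ∧ f x < x)
    (fm f2m : ℝ)
    (hfm : IsGreatest (f '' Set.Icc 0 K) fm)
    (hfmK : K < fm)
    (hf2m : IsGLB (f '' Set.Ioo K fm) f2m)
    (xmax : ℝ) (hxmax_mem : xmax ∈ Set.Icc 0 K) (hxmax_val : f xmax = fm)
    (hxmax_largest : ∀ y ∈ Set.Icc 0 K, f y = fm → y ≤ xmax)
    (Lm Lp : ℝ) (hLp : 1 < Lp) (hLmLp : Lp ≤ Lm)
    (hLipL : ∀ x ∈ Set.Ioo xmax K, f x - K ≤ Lm * (K - x))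
    (hLipR : ∀ x ∈ Set.Ioo K fm, K - f x ≤ Lp * (x - K))
    (βunder : ℝ)
    (hβunder : βunder = sInf {β : ℝ | β ∈ Set.Ioo (0:ℝ) 1 ∧
          (∀ x ∈ Set.Ioo f2m K, x < G f β (G f β x)) ∧
          (∀ x ∈ Set.Ioo K fm, G f β (G f β x) < x)})
    (βlo βhi : ℝ) (hβlo : βunder < βlo) (hβ : βlo < βhi) (hβhi : βhi < 1)
    (α : ℕ → ℝ) (hα : ∀ n, α n ∈ Set.Icc βlo βhi)
    (x : ℕ → ℝ) (hx0 : 0 < x 0)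
    (hrec : ∀ n, x (n + 1) = G f (α n) (x n)) :
    ∀ n, (x n < K → ∀ s > n, x n < x s) ∧ (K < x n → ∀ s > n, x s < x n) := by
  have hf : IsPopulationMap f K := ⟨hK, hf_cont.mono Ioi_subset_Ici_self, hbelow,
    fun x hx => (habove x hx).1, fun x hx => (habove x hx).2⟩
  have hxmaxK : xmax < K := hxmax_mem.2.lt_of_ne <| ne_of_apply_ne f <| by
    rw [hxmax_val, hf.map_equilibrium]
    exact hfmK.ne'
  exact stmt8_general hf hfm hf2m (mem_of_superset (Ioo_mem_nhdsLT hxmaxK) hLipL)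
    (mem_of_superset (Ioo_mem_nhdsGT hfmK) hLipR)
    (fun n => ⟨hβunder ▸ hβlo.trans_le (hα n).1, (hα n).2.trans_lt hβhi⟩) hx0 hrec
end

section
/- Let m ≥ 2 and 0 < a_m < a_{m−1} < ⋯ < a_1 < a_0 := K, and let L_i^−, L_i^+ > 0 for i = 0,…,m−1 with L_0^− L_0^+ > 1. Set α₀ := Ψ(L_0^−, L_0^+) and, for each i, 𝓛_i^±(α) := L_i^± − α(L_i^± + 1); assume 𝓛_{i−1}^−(α₀) > 0 for all i = 1,…,m, and define b_0 := K and b_i := 𝓛_{i−1}^−(α₀)(a_{i−1} − a_i) + b_{i−1} for i = 1,…,m. Suppose: f(x) − K ≤ L_0^−(K−x) for all x ∈ [a_1, K]; K − f(x) ≤ L_0^+(x−K) for all x > K; for each i = 1,…,m−1: f(x) − f(a_i) ≤ L_i^−(a_i − x) for all x ∈ [a_{i+1}, a_i] and f(b_i) − f(x) ≤ L_i^+(x − b_i) for all x ≥ b_i; α₀ ≥ Ψ(L_i^−, L_i^+) for every i = 1,…,m−1; and [f²_m, f_m] ⊆ [a_m, b_m]. Then for every α ∈ (α₀, 1) and every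 x₀ > 0, the sequence defined by x_{n+1} = (1−α)f(x_n) + α x_n converges to K. -/
/-!
With `F_α x = (1 - α) f x + α x`, let `S` and `I` be the largest and the smallest cluster point of
an orbit of `F_α`. Cluster points are images of cluster points, and `F_α` lies above the diagonal on
`(0, K)` and below it on `(K, ∞)`, so `S = F_α y` and `I = F_α z` with `y ≤ K ≤ z`. Unless
`S = I = K`, this gives `y < K < z ≤ F_α y` and `F_α z ≤ y`.

Such a crossing is excluded by the decreasing polygonal chain through the points `(a i, b i)`. The
choice of `b` puts the graph of `F_{α₀}` below the chain on `[a m, K]`; since `α₀ ≥ Ψ` amounts to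
`𝓛⁻(α₀) * 𝓛⁺(α₀) ≤ 1`, the graph reflected in the diagonal lies above the chain on `[K, b m]`.
Raising `α₀` to `α` moves `F_α` strictly towards the diagonal, so `z ≤ F_α y < F_{α₀} y` yields
`y ≤ F_{α₀} z < F_α z`.
-/

open Set Filter

/-- `Ψ(u,v) = (uv−1)/((u+1)(v+1))`. -/
noncomputable def Psi (u v : ℝ) : ℝ := (u * v - 1) / ((u + 1) * (v + 1))

open Topology

section Orbits

theorem exists_mapClusterPt_of_mapClusterPt_comp {ι X Y : Type*} [TopologicalSpace X]
    [TopologicalSpace Y] [T2Space Y] {s : Set X} {g : X → Y} {u : ι → X} {l : Filter ι} {b : Y}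
    (hs : IsCompact s) (hg : ContinuousOn g s) (hu : ∀ᶠ i in l, u i ∈ s)
    (hb : MapClusterPt b l (g ∘ u)) : ∃ y ∈ s, MapClusterPt y l u ∧ g y = b := by
  obtain ⟨U, hUl, hUb⟩ := mapClusterPt_iff_ultrafilter.1 hb
  obtain ⟨y, hys, hUy⟩ := hs.ultrafilter_le_nhds (U.map u) (le_principal_iff.2 (hUl hu))
  have hUy' : Tendsto u U (𝓝[s] y) := tendsto_nhdsWithin_iff.2 ⟨hUy, hUl hu⟩
  exact ⟨y, hys, mapClusterPt_iff_ultrafilter.2 ⟨U, hUl, hUy⟩,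
    tendsto_nhds_unique ((hg y hys).tendsto.comp hUy') hUb⟩

theorem mapClusterPt_comp_of_orbit {X : Type*} [TopologicalSpace X] {g : X → X} {x : ℕ → X}
    {b : X} (hrec : ∀ n, x (n + 1) = g (x n)) (hb : MapClusterPt b atTop x) :
    MapClusterPt b atTop (g ∘ x) := by
  have hshift : g ∘ x = x ∘ (· + 1) := funext fun n => (hrec n).symm
  rwa [MapClusterPt, hshift, ← map_map, map_add_atTop_eq_nat]

variable {X : Type*} [LinearOrder X] [TopologicalSpace X]

theorem apply_eq_self_of_eventually_le [OrderClosedTopology X] {f : X → X} {K : X}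
    [NeBot (𝓝[<] K)] [NeBot (𝓝[>] K)] (hf : ContinuousAt f K)
    (hbelow : ∀ᶠ y in 𝓝[<] K, y ≤ f y) (habove : ∀ᶠ y in 𝓝[>] K, f y ≤ y) : f K = K :=
  le_antisymm
    (le_of_tendsto_of_tendsto (hf.tendsto.mono_left nhdsWithin_le_nhds)
      (tendsto_id.mono_left nhdsWithin_le_nhds) habove)
    (le_of_tendsto_of_tendsto (tendsto_id.mono_left nhdsWithin_le_nhds)
      (hf.tendsto.mono_left nhdsWithin_le_nhds) hbelow)

variable [OrderTopology X] [CompactIccSpace X] {g : X → X} {x : ℕ → X} {K : X}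

theorem exists_isLeast_isGreatest_setOf_mapClusterPt {c B : X} (hx : ∀ n, x n ∈ Icc c B) :
    ∃ I S, IsLeast {y | MapClusterPt y atTop x} I ∧ IsGreatest {y | MapClusterPt y atTop x} S := by
  have hmap : map x atTop ≤ 𝓟 (Icc c B) := tendsto_principal.2 (.of_forall hx)
  have hsub : {y | MapClusterPt y atTop x} ⊆ Icc c B := fun y hy =>
    isClosed_Icc.closure_subset (mem_closure_iff_clusterPt.2 (ClusterPt.mono hy hmap))
  have hcomp : IsCompact {y | MapClusterPt y atTop x} :=
    isCompact_Icc.of_isClosed_subset isClosed_setOfPred_clusterPt hsub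
  have hne : {y | MapClusterPt y atTop x}.Nonempty :=
    let ⟨y, _, hy⟩ := isCompact_Icc.exists_mapClusterPt hmap
    ⟨y, hy⟩
  obtain ⟨I, hI⟩ := hcomp.exists_isLeast hne
  obtain ⟨S, hS⟩ := hcomp.exists_isGreatest hne
  exact ⟨I, S, hI, hS⟩

theorem tendsto_of_forall_lt_apply_of_le_apply {c B : X} (hx : ∀ n, x n ∈ Icc c B)
    (hrec : ∀ n, x (n + 1) = g (x n)) (hg : ContinuousOn g (Icc c B)) (hgK : g K = K)
    (hbelow : ∀ y ∈ Icc c B, y < K → y < g y) (habove : ∀ y ∈ Icc c B, K < y → g y < y)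
    (hcross : ∀ y ∈ Icc c B, ∀ z ∈ Icc c B, y < K → K < z → z ≤ g y → y < g z) :
    Tendsto x atTop (𝓝 K) := by
  have hpre (s : X) (hs : MapClusterPt s atTop x) :
      ∃ y ∈ Icc c B, MapClusterPt y atTop x ∧ g y = s :=
    exists_mapClusterPt_of_mapClusterPt_comp isCompact_Icc hg (.of_forall hx)
      (mapClusterPt_comp_of_orbit hrec hs)
  obtain ⟨I, S, hI, hS⟩ := exists_isLeast_isGreatest_setOf_mapClusterPt hx
  obtain ⟨y, hy, hyx, hyS⟩ := hpre S hS.1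
  obtain ⟨z, hz, hzx, hzI⟩ := hpre I hI.1
  have hyK : y ≤ K := not_lt.1 fun h => ((habove y hy h).trans_le (hS.2 hyx)).ne hyS
  have hKz : K ≤ z := not_lt.1 fun h => ((hI.2 hzx).trans_lt (hbelow z hz h)).ne' hzI
  have hyz : y = K ∨ z = K := by
    by_contra! h
    have hlt := hcross y hy z hz (hyK.lt_of_ne h.1) (hKz.lt_of_ne' h.2) (hyS ▸ hS.2 hzx)
    exact hlt.not_ge (hzI ▸ hI.2 hyx)
  have hSI : S = K ∧ I = K := by
    rcases hyz with rfl | rfl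
    · have hSy : S = y := hyS.symm.trans hgK
      have hzy : z = y := (hSy ▸ hS.2 hzx).antisymm hKz
      exact ⟨hSy, by rw [← hzI, hzy, hgK]⟩
    · have hIz : I = z := hzI.symm.trans hgK
      have hyz : y = z := hyK.antisymm (hIz ▸ hI.2 hyx)
      exact ⟨by rw [← hyS, hyz, hgK], hIz⟩
  refine isCompact_Icc.tendsto_nhds_of_unique_mapClusterPt (.of_forall hx) fun w _ hw => ?_
  exact (hSI.1 ▸ hS.2 hw).antisymm (hSI.2 ▸ hI.2 hw)

theorem exists_forall_mem_Icc_of_orbit {l : X} (hlK : l < K) (hg : ContinuousOn g (Ioi l))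
    (hmaps : MapsTo g (Ioi l) (Ioi l)) (hbelow : ∀ y ∈ Ioc l K, y ≤ g y)
    (habove : ∀ y, K < y → g y ≤ y) (hbdd : BddAbove (g '' Ioc l K)) (hx₀ : l < x 0)
    (hrec : ∀ n, x (n + 1) = g (x n)) : ∃ c > l, ∃ B, ∀ n, x n ∈ Icc c B := by
  obtain ⟨M, hM⟩ := hbdd
  have hgM {y : X} (hy : y ∈ Ioc l K) : g y ≤ M := hM (mem_image_of_mem g hy)
  have hKM : K ≤ M := (hbelow K ⟨hlK, le_rfl⟩).trans (hgM ⟨hlK, le_rfl⟩)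
  have hxl (n : ℕ) : l < x n := by
    induction n with
    | zero => exact hx₀
    | succ n ih => exact hrec n ▸ hmaps ih
  have hxB (n : ℕ) : x n ≤ max (x 0) M := by
    induction n with
    | zero => exact le_max_left _ _
    | succ n ih =>
      rw [hrec]
      rcases le_or_gt (x n) K with h | h
      · exact (hgM ⟨hxl n, h⟩).trans (le_max_right _ _)
      · exact (habove _ h).trans ih
  obtain ⟨w, hw, hwmin⟩ := isCompact_Icc.exists_isMinOn
    (nonempty_Icc.2 (hKM.trans (le_max_right (x 0) M)))
    (hg.mono fun y hy => hlK.trans_le hy.1)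
  have hxc (n : ℕ) : min (x 0) (g w) ≤ x n := by
    induction n with
    | zero => exact min_le_left _ _
    | succ n ih =>
      rw [hrec]
      rcases le_or_gt (x n) K with h | h
      · exact ih.trans (hbelow _ ⟨hxl n, h⟩)
      · exact (min_le_right _ _).trans (hwmin ⟨h.le, hxB n⟩)
  exact ⟨_, lt_min hx₀ (hmaps (hlK.trans_le hw.1)), _, fun n => ⟨hxc n, hxB n⟩⟩

theorem tendsto_of_continuousOn_Ioi_of_forall_lt_apply {l : X} (hlK : l < K)
    (hg : ContinuousOn g (Ioi l)) (hmaps : MapsTo g (Ioi l) (Ioi l)) (hgK : g K = K)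
    (hbelow : ∀ y ∈ Ioo l K, y < g y) (habove : ∀ y, K < y → g y < y)
    (hbdd : BddAbove (g '' Ioc l K)) (hcross : ∀ y ∈ Ioo l K, ∀ z, K < z → z ≤ g y → y < g z)
    (hx₀ : l < x 0) (hrec : ∀ n, x (n + 1) = g (x n)) : Tendsto x atTop (𝓝 K) := by
  have hbelow' (y : X) (hy : y ∈ Ioc l K) : y ≤ g y := by
    rcases hy.2.lt_or_eq with h | rfl
    · exact (hbelow y ⟨hy.1, h⟩).le
    · exact hgK.ge
  obtain ⟨c, hc, B, hx⟩ := exists_forall_mem_Icc_of_orbit hlK hg hmaps hbelow'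
    (fun y hy => (habove y hy).le) hbdd hx₀ hrec
  exact tendsto_of_forall_lt_apply_of_le_apply hx hrec (hg.mono fun y hy => hc.trans_le hy.1) hgK
    (fun y hy hyK => hbelow y ⟨hc.trans_le hy.1, hyK⟩) (fun y _ => habove y)
    (fun y hy z _ hyK => hcross y ⟨hc.trans_le hy.1, hyK⟩ z)

end Orbits

section Chains

theorem exists_mem_Ico_succ {X : Type*} [LinearOrder X] {c : ℕ → X} {m : ℕ} {z : X}
    (hz : z ∈ Ico (c 0) (c m)) : ∃ j < m, z ∈ Ico (c j) (c (j + 1)) := by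
  induction m with
  | zero => exact absurd hz.2 hz.1.not_gt
  | succ k ih =>
    rcases lt_or_ge z (c k) with h | h
    · obtain ⟨j, hj, hzj⟩ := ih ⟨hz.1, h⟩
      exact ⟨j, hj.trans k.lt_succ_self, hzj⟩
    · exact ⟨k, k.lt_succ_self, h, hz.2⟩

theorem exists_mem_Ioc_succ {X : Type*} [LinearOrder X] {c : ℕ → X} {m : ℕ} {z : X}
    (hz : z ∈ Ioc (c m) (c 0)) : ∃ j < m, z ∈ Ioc (c (j + 1)) (c j) := by
  obtain ⟨j, hj, hz₁, hz₂⟩ := exists_mem_Ico_succ (X := Xᵒᵈ) (c := c) (z := z) ⟨hz.2, hz.1⟩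
  exact ⟨j, hj, hz₂, hz₁⟩

variable {R : Type*} [CommRing R] [LinearOrder R]

/-- `(a 0, b 0), …, (a m, b m)` are the vertices of a decreasing polygonal chain, listed from right
to left, and `-ℓ i` is the slope of the edge from vertex `i` to vertex `i + 1`. -/
structure IsDecreasingChain (m : ℕ) (a b ℓ : ℕ → R) : Prop where
  abscissa_succ_lt : ∀ i < m, a (i + 1) < a i
  slope_pos : ∀ i < m, 0 < ℓ i
  ordinate_succ : ∀ i < m, b (i + 1) = ℓ i * (a i - a (i + 1)) + b i

namespace IsDecreasingChain

variable {m : ℕ} {a b ℓ : ℕ → R} {G : R → R}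

theorem antitoneOn_abscissa (h : IsDecreasingChain m a b ℓ) : AntitoneOn a (Iic m) :=
  antitoneOn_of_add_one_le ordConnected_Iic fun i _ _ hi => (h.abscissa_succ_lt i hi).le

variable [IsStrictOrderedRing R]

theorem ordinate_lt_succ (h : IsDecreasingChain m a b ℓ) {i : ℕ} (hi : i < m) :
    b i < b (i + 1) := by
  rw [h.ordinate_succ i hi]
  exact lt_add_of_pos_left _ (mul_pos (h.slope_pos i hi) (sub_pos.2 (h.abscissa_succ_lt i hi)))

theorem monotoneOn_ordinate (h : IsDecreasingChain m a b ℓ) : MonotoneOn b (Iic m) :=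
  monotoneOn_of_le_add_one ordConnected_Iic fun _ _ _ hi => (h.ordinate_lt_succ hi).le

theorem le_of_below_of_above (h : IsDecreasingChain m a b ℓ) {i j : ℕ} (hi : i < m) (hj : j < m)
    {w y z : R} (hy : y ∈ Icc (a (i + 1)) (a i)) (hz : z ∈ Icc (b j) (b (j + 1)))
    (hyz : z < ℓ i * (a i - y) + b i) (hwz : ℓ j * (a j - w) ≤ z - b j) : y ≤ w := by
  by_contra! hwy
  have hℓi := h.slope_pos i hi
  have hℓj := h.slope_pos j hj
  rcases lt_trichotomy i j with hij | rfl | hji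
  · have hb : b (i + 1) ≤ b j := h.monotoneOn_ordinate (mem_Iic.2 hi) hj.le hij
    have hedge : ℓ i * (a i - y) ≤ ℓ i * (a i - a (i + 1)) :=
      mul_le_mul_of_nonneg_left (sub_le_sub_left hy.1 _) hℓi.le
    linarith [h.ordinate_succ i hi, hz.1]
  · have hedge : ℓ i * (a i - y) < ℓ i * (a i - w) :=
      mul_lt_mul_of_pos_left (sub_lt_sub_left hwy _) hℓi
    linarith
  · have ha : a i ≤ a (j + 1) := h.antitoneOn_abscissa (mem_Iic.2 hj) hi.le hji
    have hedge : ℓ j * (a j - a (j + 1)) < ℓ j * (a j - w) :=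
      mul_lt_mul_of_pos_left (by linarith [hy.2]) hℓj
    linarith [h.ordinate_succ j hj, hz.2]

theorem apply_abscissa_le (h : IsDecreasingChain m a b ℓ) (h₀ : G (a 0) ≤ b 0)
    (hleft : ∀ i < m, ∀ y ∈ Icc (a (i + 1)) (a i), G y - G (a i) ≤ ℓ i * (a i - y)) :
    ∀ i ≤ m, G (a i) ≤ b i := by
  intro i hi
  induction i with
  | zero => exact h₀
  | succ k ih =>
    have hedge := hleft k hi _ (left_mem_Icc.2 (h.abscissa_succ_lt k hi).le)
    linarith [ih (Nat.le_of_succ_le hi), h.ordinate_succ k hi]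

theorem abscissa_le_apply_ordinate (h : IsDecreasingChain m a b ℓ) (h₀ : a 0 ≤ G (b 0))
    (hright : ∀ i < m, ∀ z ∈ Icc (b i) (b (i + 1)), ℓ i * (G (b i) - G z) ≤ z - b i) :
    ∀ i ≤ m, a i ≤ G (b i) := by
  intro i hi
  induction i with
  | zero => exact h₀
  | succ k ih =>
    have hedge := hright k hi _ (right_mem_Icc.2 (h.ordinate_lt_succ hi).le)
    have hdrop : G (b k) - G (b (k + 1)) ≤ a k - a (k + 1) :=
      le_of_mul_le_mul_left (by linarith [h.ordinate_succ k hi]) (h.slope_pos k hi)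
    linarith [ih (Nat.le_of_succ_le hi)]

theorem le_apply_of_lt_apply (h : IsDecreasingChain m a b ℓ) (h₁ : G (a 0) ≤ b 0)
    (h₂ : a 0 ≤ G (b 0))
    (hleft : ∀ i < m, ∀ y ∈ Icc (a (i + 1)) (a i), G y - G (a i) ≤ ℓ i * (a i - y))
    (hright : ∀ i < m, ∀ z ∈ Icc (b i) (b (i + 1)), ℓ i * (G (b i) - G z) ≤ z - b i)
    {y z : R} (hy : y ∈ Ioc (a m) (a 0)) (hz : z ∈ Ico (b 0) (b m)) (hyz : z < G y) :
    y ≤ G z := by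
  obtain ⟨i, hi, hyi⟩ := exists_mem_Ioc_succ hy
  obtain ⟨j, hj, hzj⟩ := exists_mem_Ico_succ hz
  have hyi' := Ioc_subset_Icc_self hyi
  have hzj' := Ico_subset_Icc_self hzj
  refine h.le_of_below_of_above hi hj hyi' hzj' ?_ ?_
  · linarith [hleft i hi y hyi', h.apply_abscissa_le h₁ hleft i hi.le]
  · calc ℓ j * (a j - G z) ≤ ℓ j * (G (b j) - G z) :=
          mul_le_mul_of_nonneg_left
            (sub_le_sub_right (h.abscissa_le_apply_ordinate h₂ hright j hj.le) _)
            (h.slope_pos j hj).le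
      _ ≤ z - b j := hright j hj z hzj'

end IsDecreasingChain

end Chains

section Control

/-- The map `F_α` obtained from `f` by prediction-based control with constant control `α`. -/
def controlledMap (f : ℝ → ℝ) (α x : ℝ) : ℝ := (1 - α) * f x + α * x

/-- The one-sided Lipschitz constant `𝓛(α)` that `controlledMap f α` inherits from a one-sided
Lipschitz constant `L` of `f`. -/
def controlledSlope (α L : ℝ) : ℝ := L - α * (L + 1)

variable {f : ℝ → ℝ} {α α₀ x y K L : ℝ}

@[simp] theorem controlledMap_zero : controlledMap f 0 x = f x := by simp [controlledMap]

@[simp] theorem controlledMap_one : controlledMap f 1 x = x := by simp [controlledMap]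

theorem controlledMap_of_apply_eq_self (hx : f x = x) : controlledMap f α x = x := by
  rw [controlledMap, hx]; ring

theorem continuousOn_controlledMap {s : Set ℝ} (hf : ContinuousOn f s) :
    ContinuousOn (controlledMap f α) s :=
  (continuousOn_const.mul hf).add (continuousOn_const.mul continuousOn_id)

theorem strictAnti_controlledMap (hx : x < f x) : StrictAnti fun α => controlledMap f α x :=
  fun α β hαβ => by
    have := mul_pos (sub_pos.2 hαβ) (sub_pos.2 hx)
    simp only [controlledMap]
    linarith

theorem strictMono_controlledMap (hx : f x < x) : StrictMono fun α => controlledMap f α x :=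
  fun α β hαβ => by
    have := mul_pos (sub_pos.2 hαβ) (sub_pos.2 hx)
    simp only [controlledMap]
    linarith

theorem lt_controlledMap (hα : α < 1) (hx : x < f x) : x < controlledMap f α x := by
  simpa using strictAnti_controlledMap hx hα

theorem controlledMap_lt (hα : α < 1) (hx : f x < x) : controlledMap f α x < x := by
  simpa using strictMono_controlledMap hx hα

theorem controlledMap_lt_apply (hα : 0 < α) (hx : x < f x) : controlledMap f α x < f x := by
  simpa using strictAnti_controlledMap hx hα

theorem apply_lt_controlledMap (hα : 0 < α) (hx : f x < x) : f x < controlledMap f α x := by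
  simpa using strictMono_controlledMap hx hα

theorem controlledMap_sub_le (hα : α ≤ 1) (hL : f x - f y ≤ L * (y - x)) :
    controlledMap f α x - controlledMap f α y ≤ controlledSlope α L * (y - x) := by
  have := mul_le_mul_of_nonneg_left hL (sub_nonneg.2 hα)
  simp only [controlledMap, controlledSlope]
  linarith

theorem Psi_pos {u v : ℝ} (hu : 0 < u) (hv : 0 < v) (huv : 1 < u * v) : 0 < Psi u v :=
  div_pos (sub_pos.2 huv) (by positivity)

theorem neg_one_lt_of_controlledSlope_pos (hα : α < 1) (hL : 0 < controlledSlope α L) :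
    -1 < L := by
  have hscale : controlledSlope α L = (1 - α) * (L + 1) - 1 := by rw [controlledSlope]; ring
  have hpos : 0 < (1 - α) * (L + 1) := by linarith
  linarith [pos_of_mul_pos_right hpos (sub_pos.2 hα).le]

theorem controlledSlope_mul_controlledSlope_le_one {u v : ℝ} (hu : -1 < u) (hv : -1 < v)
    (hα : α ≤ 1) (hΨ : Psi u v ≤ α) : controlledSlope α u * controlledSlope α v ≤ 1 := by
  have hu' : 0 < u + 1 := by linarith
  have hv' : 0 < v + 1 := by linarith
  have hΨ' : u * v - 1 ≤ α * ((u + 1) * (v + 1)) := (div_le_iff₀ (mul_pos hu' hv')).1 hΨ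
  have hprod : controlledSlope α u * controlledSlope α v =
      1 - (1 - α) * (α * ((u + 1) * (v + 1)) - (u * v - 1)) := by
    simp only [controlledSlope]; ring
  rw [hprod]
  exact sub_le_self _ (mul_nonneg (sub_nonneg.2 hα) (sub_nonneg.2 hΨ'))

theorem mapsTo_controlledMap_Ioi (hα : α ∈ Ioo 0 1) (hfK : f K = K)
    (hbelow : ∀ y ∈ Ioo 0 K, y < f y) (habove : ∀ y ∈ Ioi K, 0 < f y ∧ f y < y) :
    MapsTo (controlledMap f α) (Ioi 0) (Ioi 0) := by
  intro y (hy : 0 < y)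
  rcases lt_trichotomy y K with h | rfl | h
  · exact hy.trans (lt_controlledMap hα.2 (hbelow y ⟨hy, h⟩))
  · exact (controlledMap_of_apply_eq_self hfK).symm ▸ hy
  · exact (habove y h).1.trans (apply_lt_controlledMap hα.1 (habove y h).2)

theorem tendsto_controlledMap_of_isDecreasingChain {M : ℝ} {m : ℕ} {a b ℓ : ℕ → ℝ} {x : ℕ → ℝ}
    (h : IsDecreasingChain m a b ℓ) (ha₀ : a 0 = K) (hb₀ : b 0 = K) (hK : 0 < K)
    (hf : ContinuousOn f (Ioi 0)) (hfK : f K = K) (hbelow : ∀ y ∈ Ioo 0 K, y < f y)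
    (habove : ∀ y ∈ Ioi K, 0 < f y ∧ f y < y) (hM : ∀ y ∈ Ioc 0 K, f y ≤ M) (hMb : M ≤ b m)
    (ham : ∀ z ∈ Ioo K M, a m ≤ f z) (hα₀ : 0 ≤ α₀) (hα : α ∈ Ioo α₀ 1)
    (hleft : ∀ i < m, ∀ y ∈ Icc (a (i + 1)) (a i),
      controlledMap f α₀ y - controlledMap f α₀ (a i) ≤ ℓ i * (a i - y))
    (hright : ∀ i < m, ∀ z ∈ Icc (b i) (b (i + 1)),
      ℓ i * (controlledMap f α₀ (b i) - controlledMap f α₀ z) ≤ z - b i)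
    (hx₀ : 0 < x 0) (hrec : ∀ n, x (n + 1) = controlledMap f α (x n)) :
    Tendsto x atTop (𝓝 K) := by
  have hαpos : 0 < α := hα₀.trans_lt hα.1
  have hFK (β : ℝ) : controlledMap f β K = K := controlledMap_of_apply_eq_self hfK
  refine tendsto_of_continuousOn_Ioi_of_forall_lt_apply hK (continuousOn_controlledMap hf)
    (mapsTo_controlledMap_Ioi ⟨hαpos, hα.2⟩ hfK hbelow habove) (hFK α)
    (fun y hy => lt_controlledMap hα.2 (hbelow y hy))
    (fun y hy => controlledMap_lt hα.2 (habove y hy).2) ⟨M, ?_⟩ ?_ hx₀ hrec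
  · rintro _ ⟨y, hy, rfl⟩
    rcases hy.2.lt_or_eq with hyK | rfl
    · exact (controlledMap_lt_apply hαpos (hbelow y ⟨hy.1, hyK⟩)).le.trans (hM y hy)
    · exact (hFK α).trans_le (hfK.symm.trans_le (hM y hy))
  · intro y hy z hKz hzy
    by_contra! hyz
    have hyf : y < f y := hbelow y hy
    have hzf : f z < z := (habove z hKz).2
    have hzM : z < M :=
      (hzy.trans_lt (controlledMap_lt_apply hαpos hyf)).trans_le (hM y (Ioo_subset_Ioc_self hy))
    have hay : a m < y :=
      ((ham z ⟨hKz, hzM⟩).trans_lt (apply_lt_controlledMap hαpos hzf)).trans_le hyz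
    have hle : y ≤ controlledMap f α₀ z :=
      h.le_apply_of_lt_apply (by rw [ha₀, hb₀, hFK]) (by rw [ha₀, hb₀, hFK]) hleft hright
        ⟨hay, ha₀ ▸ hy.2.le⟩ ⟨hb₀ ▸ hKz.le, hzM.trans_le hMb⟩
        (hzy.trans_lt (strictAnti_controlledMap hyf hα.1))
    exact (hle.trans_lt (strictMono_controlledMap hzf hα.1)).not_ge hyz

end Control

theorem stmt18_general {f : ℝ → ℝ} {K M : ℝ} (hf : ContinuousOn f (Ioi 0)) (hK : 0 < K)
    (hbelow : ∀ y ∈ Ioo 0 K, y < f y) (habove : ∀ y ∈ Ioi K, 0 < f y ∧ f y < y)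
    (hM : ∀ y ∈ Ioc 0 K, f y ≤ M) {m : ℕ} {a b Lneg Lpos : ℕ → ℝ} (ha₀ : a 0 = K)
    (ha_dec : ∀ i < m, a (i + 1) < a i) (hLpos : ∀ i < m, -1 < Lpos i)
    {α₀ : ℝ} (hα₀ : 0 ≤ α₀) (hΨ : ∀ i < m, Psi (Lneg i) (Lpos i) ≤ α₀)
    (hslope : ∀ i < m, 0 < controlledSlope α₀ (Lneg i)) (hb₀ : b 0 = K)
    (hb : ∀ i < m, b (i + 1) = controlledSlope α₀ (Lneg i) * (a i - a (i + 1)) + b i)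
    (hf₀L : ∀ y ∈ Icc (a 1) K, f y - K ≤ Lneg 0 * (K - y))
    (hf₀R : ∀ z ∈ Ioc K (b 1), K - f z ≤ Lpos 0 * (z - K))
    (hfL : ∀ i, 1 ≤ i → i < m →
      ∀ y ∈ Icc (a (i + 1)) (a i), f y - f (a i) ≤ Lneg i * (a i - y))
    (hfR : ∀ i, 1 ≤ i → i < m →
      ∀ z ∈ Icc (b i) (b (i + 1)), f (b i) - f z ≤ Lpos i * (z - b i))
    (ham : ∀ z ∈ Ioo K M, a m ≤ f z) (hMb : M ≤ b m) {α : ℝ} (hα : α ∈ Ioo α₀ 1) {x : ℕ → ℝ}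
    (hx₀ : 0 < x 0) (hrec : ∀ n, x (n + 1) = controlledMap f α (x n)) :
    Tendsto x atTop (𝓝 K) := by
  have hfK : f K = K := apply_eq_self_of_eventually_le (hf.continuousAt (Ioi_mem_nhds hK))
    (by filter_upwards [Ioo_mem_nhdsLT hK] with y hy using (hbelow y hy).le)
    (by filter_upwards [self_mem_nhdsWithin] with y hy using (habove y hy).2.le)
  have hleft : ∀ i < m, ∀ y ∈ Icc (a (i + 1)) (a i), f y - f (a i) ≤ Lneg i * (a i - y)
    | 0, _ => by simpa only [ha₀, hfK] using hf₀L
    | i + 1, hi => hfL (i + 1) i.succ_pos hi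
  have hright : ∀ i < m, ∀ z ∈ Icc (b i) (b (i + 1)), f (b i) - f z ≤ Lpos i * (z - b i)
    | 0, _ => fun z hz => by
      rw [hb₀] at hz ⊢
      rcases hz.1.eq_or_lt with rfl | hKz
      · simp
      · exact hfK.symm ▸ hf₀R z ⟨hKz, hz.2⟩
    | i + 1, hi => hfR (i + 1) i.succ_pos hi
  have hα₀1 : α₀ ≤ 1 := (hα.1.trans hα.2).le
  refine tendsto_controlledMap_of_isDecreasingChain ⟨ha_dec, hslope, hb⟩ ha₀ hb₀ hK hf hfK hbelow
    habove hM hMb ham hα₀ hα (fun i hi y hy => controlledMap_sub_le hα₀1 (hleft i hi y hy))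
    (fun i hi z hz => ?_) hx₀ hrec
  have hLneg : -1 < Lneg i := neg_one_lt_of_controlledSlope_pos (hα.1.trans hα.2) (hslope i hi)
  calc controlledSlope α₀ (Lneg i) * (controlledMap f α₀ (b i) - controlledMap f α₀ z)
      ≤ controlledSlope α₀ (Lneg i) * (controlledSlope α₀ (Lpos i) * (z - b i)) :=
        mul_le_mul_of_nonneg_left (controlledMap_sub_le hα₀1 (hright i hi z hz)) (hslope i hi).le
    _ = controlledSlope α₀ (Lneg i) * controlledSlope α₀ (Lpos i) * (z - b i) := by ring
    _ ≤ z - b i := mul_le_of_le_one_left (sub_nonneg.2 hz.1)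
        (controlledSlope_mul_controlledSlope_le_one hLneg (hLpos i hi) hα₀1 (hΨ i hi))

/-- global stability via a piecewise envelope built from several one-sided
Lipschitz constants: under the stated conditions, every constant control α ∈ (α₀,1)
globally stabilizes K. -/
theorem stmt18
    (f : ℝ → ℝ) (K : ℝ)
    (hf_cont : ContinuousOn f (Set.Ici 0))
    (hf_nonneg : ∀ x, 0 ≤ x → 0 ≤ f x)
    (hf0 : f 0 = 0)
    (hK : 0 < K)
    (hbelow : ∀ x ∈ Set.Ioo 0 K, x < f x)
    (habove : ∀ x ∈ Set.Ioi K, 0 < f x ∧ f x < x)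
    (fm f2m : ℝ)
    (hfm : IsGreatest (f '' Set.Icc 0 K) fm)
    (hfmK : K < fm)
    (hf2m : IsGLB (f '' Set.Ioo K fm) f2m)
    (xmax : ℝ) (hxmax_mem : xmax ∈ Set.Icc 0 K) (hxmax_val : f xmax = fm)
    (hxmax_largest : ∀ y ∈ Set.Icc 0 K, f y = fm → y ≤ xmax)
    (Lm Lp : ℝ) (hLp : 1 < Lp) (hLmLp : Lp ≤ Lm)
    (hLipL : ∀ x ∈ Set.Ioo xmax K, f x - K ≤ Lm * (K - x))
    (hLipR : ∀ x ∈ Set.Ioo K fm, K - f x ≤ Lp * (x - K))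
    (m : ℕ) (hm : 2 ≤ m)
    (a : ℕ → ℝ) (ha0 : a 0 = K) (ham : 0 < a m)
    (ha_dec : ∀ i < m, a (i + 1) < a i)
    (Lneg Lpos : ℕ → ℝ)
    (hLprod : ∀ i < m, 0 < Lneg i ∧ 0 < Lpos i)
    (hL0 : 1 < Lneg 0 * Lpos 0)
    (α₀ : ℝ) (hα₀ : α₀ = Psi (Lneg 0) (Lpos 0))
    (hcalL_pos : ∀ i, 1 ≤ i → i ≤ m → 0 < Lneg (i - 1) - α₀ * (Lneg (i - 1) + 1))
    (b : ℕ → ℝ) (hb0 : b 0 = K)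
    (hb : ∀ i, 1 ≤ i → i ≤ m →
      b i = (Lneg (i - 1) - α₀ * (Lneg (i - 1) + 1)) * (a (i - 1) - a i) + b (i - 1))
    (hf0L : ∀ x ∈ Set.Icc (a 1) K, f x - K ≤ Lneg 0 * (K - x))
    (hf0R : ∀ x, K < x → K - f x ≤ Lpos 0 * (x - K))
    (hfiL : ∀ i, 1 ≤ i → i < m →
      ∀ x ∈ Set.Icc (a (i + 1)) (a i), f x - f (a i) ≤ Lneg i * (a i - x))
    (hfiR : ∀ i, 1 ≤ i → i < m → ∀ x, b i ≤ x → f (b i) - f x ≤ Lpos i * (x - b i))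
    (hdom : ∀ i, 1 ≤ i → i < m → Psi (Lneg i) (Lpos i) ≤ α₀)
    (hsub : a m ≤ f2m ∧ fm ≤ b m)
    (α : ℝ) (hα : α ∈ Set.Ioo α₀ 1)
    (x : ℕ → ℝ) (hx0 : 0 < x 0)
    (hrec : ∀ n, x (n + 1) = (1 - α) * f (x n) + α * x n) :
    Tendsto x atTop (nhds K) := by
  obtain rfl := hα₀
  have hL₀ := hLprod 0 (by lia)
  exact stmt18_general (hf_cont.mono Ioi_subset_Ici_self) hK hbelow habove
    (fun y hy => hfm.2 ⟨y, Ioc_subset_Icc_self hy, rfl⟩) ha0 ha_dec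
    (fun i hi => neg_one_lt_zero.trans (hLprod i hi).2) (Psi_pos hL₀.1 hL₀.2 hL0).le
    (fun | 0, _ => le_rfl | i + 1, hi => hdom (i + 1) i.succ_pos hi)
    (fun i => hcalL_pos (i + 1) i.succ_pos) hb0 (fun i => hb (i + 1) i.succ_pos)
    hf0L (fun z hz => hf0R z hz.1) hfiL (fun i hi him z hz => hfiR i hi him z hz.1)
    (fun z hz => hsub.1.trans (hf2m.1 ⟨z, hz, rfl⟩)) hsub.2 hα hx0 hrec
end
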